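/- For every natural number ℓ ≥ 0, the stable rank of the C*-algebra C(𝕋^ℓ) of continuous complex-valued functions on the ℓ-torus equals ⌊ℓ/2⌋ + 1. -/

import Mathlib

/-- The left-invertible `n`-tuples `Lg_n(A)`. -/
def lgSet (A : Type*) [Ring A] (n : ℕ) : Set (Fin n → A) :=
  {x | ∃ y : Fin n → A, ∑ i, y i * x i = 1}

/-- The stable rank of a unital topological algebra: the least `n` such that
`Lg_n(A)` is dense in `A^n`, or `∞` if there is no such `n`. -/
noncomputable def stableRank (A : Type*) [Ring A] [TopologicalSpace A] : ℕ∞ :=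
  sInf {N : ℕ∞ | ∃ n : ℕ, N = n ∧ Dense (lgSet A n)}

open Set MeasureTheory Metric Topology

namespace TorusSR

lemma injective_one_add {E : Type*} [NormedAddCommGroup E] [NormedSpace ℝ E]
    (A : E →L[ℝ] E) (hA : ‖A‖ < 1) : Function.Injective ((1 : E →L[ℝ] E) + A) := by
  rw [injective_iff_map_eq_zero]
  intro v hv
  by_contra hne
  have h1 : v = - A v := by
    have : v + A v = 0 := by simpa using hv
    exact eq_neg_of_add_eq_zero_left this
  have h2 : ‖v‖ ≤ ‖A‖ * ‖v‖ := by
    conv_lhs => rw [h1, norm_neg]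
    exact A.le_opNorm v
  have h3 : 0 < ‖v‖ := norm_pos_iff.2 hne
  nlinarith

lemma det_one_add_ne {E : Type*} [NormedAddCommGroup E] [NormedSpace ℝ E]
    [FiniteDimensional ℝ E]
    (A : E →L[ℝ] E) (hA : ‖A‖ < 1) : ((1 : E →L[ℝ] E) + A).det ≠ 0 := by
  intro h
  have h' : LinearMap.det (((1 : E →L[ℝ] E) + A : E →L[ℝ] E) : E →ₗ[ℝ] E) = 0 := h
  have h2 := LinearMap.bot_lt_ker_of_det_eq_zero h'
  rw [LinearMap.ker_eq_bot.2 (injective_one_add A hA)] at h2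
  exact lt_irrefl _ h2

lemma det_one_add_pos {E : Type*} [NormedAddCommGroup E] [NormedSpace ℝ E]
    [FiniteDimensional ℝ E]
    (A : E →L[ℝ] E) (hA : ‖A‖ < 1) : 0 < ((1 : E →L[ℝ] E) + A).det := by
  by_contra hneg
  push Not at hneg
  have hc : ContinuousOn (fun s : ℝ => ((1 : E →L[ℝ] E) + s • A).det) (Icc 0 1) := by
    apply Continuous.continuousOn
    exact ContinuousLinearMap.continuous_det.comp (by fun_prop)
  have h := intermediate_value_Icc' (zero_le_one : (0:ℝ) ≤ 1) hc
  have h0 : (0 : ℝ) ∈ Icc (((1 : E →L[ℝ] E) + (1:ℝ) • A).det)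
      (((1 : E →L[ℝ] E) + (0:ℝ) • A).det) := by
    constructor
    · simpa using hneg
    · simp [ContinuousLinearMap.det]
  obtain ⟨s, hs, hs0⟩ := h h0
  refine det_one_add_ne (s • A) ?_ hs0
  rw [norm_smul, Real.norm_of_nonneg hs.1]
  nlinarith [hs.2, hs.1, norm_nonneg A]

/-- Lagrange weights for the values at `1`. -/
lemma exists_weights (d : ℕ) (δ : ℝ) (hδ : 0 < δ) :
    ∃ (t w : Fin (d+1) → ℝ), (∀ j, 0 ≤ t j ∧ t j < δ) ∧
      ∀ p : Polynomial ℝ, p.natDegree ≤ d → p.eval 1 = ∑ j, w j * p.eval (t j) := by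
  let t : Fin (d+1) → ℝ := fun j => δ * j / (d+1)
  have hd : (0:ℝ) < d + 1 := by positivity
  have ht : Function.Injective t := by
    intro a b hab
    simp only [t] at hab
    field_simp at hab
    exact Fin.ext (by exact_mod_cast hab)
  refine ⟨t, fun j => (Lagrange.basis Finset.univ t j).eval 1, ?_, ?_⟩
  · intro j
    refine ⟨by positivity, ?_⟩
    simp only [t]
    rw [div_lt_iff₀ hd]
    have : ((j : ℕ) : ℝ) < d + 1 := by exact_mod_cast j.2
    nlinarith
  · intro p hp
    have h := Lagrange.eq_interpolate (s := Finset.univ) (v := t) (f := p) ht.injOn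
      (lt_of_le_of_lt Polynomial.degree_le_natDegree (by simp; exact_mod_cast Nat.lt_succ_of_le hp))
    conv_lhs => rw [h]
    simp [Lagrange.interpolate_apply, Polynomial.eval_finsetSum, mul_comm]

lemma exists_poly {E : Type*} [NormedAddCommGroup E] [NormedSpace ℝ E]
    [FiniteDimensional ℝ E] (A : E →L[ℝ] E) :
    ∃ p : Polynomial ℝ, p.natDegree ≤ Module.finrank ℝ E ∧
      ∀ t : ℝ, p.eval t = ((1 : E →L[ℝ] E) + t • A).det := by
  let b := Module.finBasis ℝ E
  let M := LinearMap.toMatrix b b (A : E →ₗ[ℝ] E)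
  refine ⟨Matrix.det ((Polynomial.X : Polynomial ℝ) • M.map Polynomial.C +
    (1 : Matrix _ _ ℝ).map Polynomial.C), ?_, ?_⟩
  · refine (Polynomial.natDegree_det_X_add_C_le M 1).trans ?_
    simp
  · intro t
    rw [ContinuousLinearMap.det, ← LinearMap.det_toMatrix b]
    rw [← Polynomial.coe_evalRingHom, RingHom.map_det]
    congr 1
    ext i j
    simp [M, LinearMap.toMatrix_one, Matrix.one_apply, add_comm]
    split_ifs <;> simp [mul_comm]

variable {E : Type*} [NormedAddCommGroup E] [InnerProductSpace ℝ E]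
    [FiniteDimensional ℝ E] [MeasurableSpace E] [BorelSpace E]

lemma integral_det (u : E → E) (hu : ContDiff ℝ 1 u) (L : ℝ) (hL : 0 < L)
    (hL' : ∀ x ∈ closedBall (0:E) 1, ‖fderiv ℝ u x‖ ≤ L)
    (hmaps : ∀ x ∈ closedBall (0:E) 1, ‖x + u x‖ ≤ 1)
    (hfix : ∀ x, ‖x‖ = 1 → u x = 0) (t : ℝ) (ht0 : 0 ≤ t) (ht : t < min 1 (1/L)) :
    ∫ x in ball (0:E) 1, ((1 : E →L[ℝ] E) + t • fderiv ℝ u x).det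
      = volume.real (ball (0:E) 1) := by
  have ht1 : t < 1 := lt_of_lt_of_le ht (min_le_left _ _)
  have htL : t * L < 1 := by
    have := lt_of_lt_of_le ht (min_le_right _ _)
    rwa [lt_div_iff₀ hL] at this
  let F : E → E := fun x => x + t • u x
  have hdu : Differentiable ℝ u := hu.differentiable (by simp)
  have hF' : ∀ x, HasStrictFDerivAt F ((1 : E →L[ℝ] E) + t • fderiv ℝ u x) x := by
    intro x
    have := (hu.contDiffAt (x := x)).hasStrictFDerivAt (by simp)
    exact (hasStrictFDerivAt_id x).add (this.const_smul t)
  have hnorm : ∀ x ∈ closedBall (0:E) 1, ‖t • fderiv ℝ u x‖ < 1 := by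
    intro x hx
    rw [norm_smul, Real.norm_of_nonneg ht0]
    exact lt_of_le_of_lt (mul_le_mul_of_nonneg_left (hL' x hx) ht0) htL
  have hinj : InjOn F (closedBall 0 1) := by
    intro x hx y hy hxy
    by_contra hne
    have h1 : ‖u x - u y‖ ≤ L * ‖x - y‖ :=
      (convex_closedBall (0:E) 1).norm_image_sub_le_of_norm_fderiv_le
        (fun z _ => hdu z) hL' hy hx
    have h2 : x - y = - (t • (u x - u y)) := by
      have : x + t • u x = y + t • u y := hxy
      rw [smul_sub, neg_sub, sub_eq_sub_iff_add_eq_add, this, add_comm]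
    have h3 : ‖x - y‖ = t * ‖u x - u y‖ := by
      conv_lhs => rw [h2, norm_neg, norm_smul, Real.norm_of_nonneg ht0]
    have h4 : 0 < ‖x - y‖ := norm_pos_iff.2 (sub_ne_zero.2 hne)
    nlinarith
  have hcont : Continuous F := by
    have := hu.continuous
    fun_prop
  have hmapsF : ∀ x ∈ closedBall (0:E) 1, F x ∈ closedBall (0:E) 1 := by
    intro x hx
    have h : F x = (1 - t) • x + t • (x + u x) := by
      simp only [F]; module
    rw [h]
    exact convex_closedBall (0:E) 1 hx (by simpa using hmaps x hx) (by linarith) ht0 (by ring)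
  have hfixF : ∀ x, ‖x‖ = 1 → F x = x := by
    intro x hx; simp [F, hfix x hx]
  have hsub : F '' ball 0 1 ⊆ ball 0 1 := by
    rintro _ ⟨x, hx, rfl⟩
    have h1 := hmapsF x (ball_subset_closedBall hx)
    rw [mem_closedBall_zero_iff] at h1
    rw [mem_ball_zero_iff]
    refine lt_of_le_of_ne h1 fun h => ?_
    have := hinj (by simp [h]) (ball_subset_closedBall hx) (hfixF (F x) h)
    rw [this, ] at h
    rw [mem_ball_zero_iff, h] at hx
    exact lt_irrefl _ hx
  have hopen : IsOpen (F '' ball 0 1) := by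
    rw [isOpen_iff_mem_nhds]
    rintro _ ⟨x, hx, rfl⟩
    have hdet := det_one_add_ne _ (hnorm x (ball_subset_closedBall hx))
    have h := (hF' x)
    rw [← ContinuousLinearMap.coe_toContinuousLinearEquivOfDetNeZero _ hdet] at h
    rw [← h.map_nhds_eq_of_equiv]
    exact Filter.image_mem_map (isOpen_ball.mem_nhds hx)
  have himage : F '' ball 0 1 = ball 0 1 := by
    refine hsub.antisymm ?_
    refine (convex_ball (0:E) 1).isPreconnected.subset_of_closure_inter_subset hopen ?_ ?_
    · rw [inter_eq_right.2 hsub]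
      exact ⟨F 0, 0, by simp, rfl⟩
    · rintro y ⟨hy, hyb⟩
      have hcl : closure (F '' ball 0 1) ⊆ F '' closedBall 0 1 :=
        closure_minimal (image_mono ball_subset_closedBall)
          ((isCompact_closedBall (0:E) 1).image hcont).isClosed
      obtain ⟨x, hx, rfl⟩ := hcl hy
      refine ⟨x, ?_, rfl⟩
      rw [mem_closedBall_zero_iff] at hx
      rw [mem_ball_zero_iff]
      refine lt_of_le_of_ne hx fun h => ?_
      rw [hfixF x h, mem_ball_zero_iff, h] at hyb
      exact lt_irrefl _ hyb
  have h := integral_image_eq_integral_abs_det_fderiv_smul (volume : Measure E) (s := ball 0 1)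
    measurableSet_ball (fun x _ => (hF' x).hasFDerivAt.hasFDerivWithinAt)
    (hinj.mono ball_subset_closedBall) (fun _ => (1:ℝ))
  rw [himage] at h
  simp only [integral_const, smul_eq_mul, mul_one, measureReal_restrict_apply_univ] at h
  rw [h]
  refine setIntegral_congr_fun measurableSet_ball fun x hx => ?_
  rw [abs_of_pos (det_one_add_pos _ (hnorm x (ball_subset_closedBall hx)))]

theorem no_retraction (r : E → E) (hr : ContDiff ℝ 1 r) (h1 : ∀ x, ‖r x‖ = 1)
    (hfix : ∀ x, ‖x‖ = 1 → r x = x) : False := by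
  let u : E → E := fun x => r x - x
  have hu : ContDiff ℝ 1 u := hr.sub contDiff_id
  have hcu : Continuous (fun x => fderiv ℝ u x) := hu.continuous_fderiv (by simp)
  obtain ⟨L0, hL0⟩ := (isCompact_closedBall (0:E) 1).exists_bound_of_continuousOn hcu.continuousOn
  let L := max L0 1
  have hL : 0 < L := lt_of_lt_of_le one_pos (le_max_right _ _)
  have key := integral_det u hu L hL (fun x hx => (hL0 x hx).trans (le_max_left _ _))
    (fun x _ => by simp [u, h1]) (fun x hx => by simp [u, hfix x hx])
  obtain ⟨t, w, ht, hw⟩ := exists_weights (Module.finrank ℝ E) (min 1 (1/L)) (by positivity)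
  have hintg : ∀ s : ℝ, IntegrableOn (fun x => ((1 : E →L[ℝ] E) + s • fderiv ℝ u x).det)
      (ball (0:E) 1) := by
    intro s
    have hc : Continuous (fun x => ((1 : E →L[ℝ] E) + s • fderiv ℝ u x).det) :=
      ContinuousLinearMap.continuous_det.comp (by fun_prop)
    exact (hc.continuousOn.integrableOn_compact (isCompact_closedBall (0:E) 1)).mono_set
      ball_subset_closedBall
  have hsum : ∑ j, w j = 1 := by
    have := hw 1 (by simp)
    simpa using this.symm
  have hpt : ∀ x, ((1 : E →L[ℝ] E) + fderiv ℝ u x).det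
      = ∑ j, w j * ((1 : E →L[ℝ] E) + t j • fderiv ℝ u x).det := by
    intro x
    obtain ⟨p, hp, hpe⟩ := exists_poly (fderiv ℝ u x)
    have := hw p hp
    simpa [hpe] using this
  have hvol : ∫ x in ball (0:E) 1, ((1 : E →L[ℝ] E) + fderiv ℝ u x).det
      = volume.real (ball (0:E) 1) := by
    simp_rw [hpt]
    rw [integral_finsetSum _ (fun j _ => (hintg (t j)).const_mul _)]
    simp_rw [integral_const_mul]
    rw [Finset.sum_congr rfl (fun j _ => by rw [key (t j) (ht j).1 (ht j).2]),
      ← Finset.sum_mul, hsum, one_mul]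
  have hzero : ∀ x, ((1 : E →L[ℝ] E) + fderiv ℝ u x).det = 0 := by
    intro x
    have hdr : DifferentiableAt ℝ r x := hr.differentiable (by simp) x
    have hfd : (1 : E →L[ℝ] E) + fderiv ℝ u x = fderiv ℝ r x := by
      have : fderiv ℝ u x = fderiv ℝ r x - ContinuousLinearMap.id ℝ E := by
        have := fderiv_sub hdr (differentiableAt_id (𝕜 := ℝ) (x := x))
        rw [fderiv_id] at this
        exact this
      rw [this]; ext v; simp
    rw [hfd]
    by_contra hne
    let e := ContinuousLinearMap.toContinuousLinearEquivOfDetNeZero _ hne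
    have horth : ∀ v, inner ℝ (r x) (fderiv ℝ r x v) = 0 := by
      intro v
      have h2 : HasFDerivAt (fun y => inner ℝ (r y) (r y)) _ x :=
        hdr.hasFDerivAt.inner ℝ hdr.hasFDerivAt
      have h3 : (fun y => inner ℝ (r y) (r y)) = fun _ => (1:ℝ) := by
        ext y; rw [real_inner_self_eq_norm_sq, h1]; norm_num
      rw [h3] at h2
      have h4 := h2.unique (hasFDerivAt_const (1:ℝ) x)
      have h5 := DFunLike.congr_fun h4 v
      simp [real_inner_comm] at h5
      exact h5
    have h6 := horth (e.symm (r x))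
    have h7 : fderiv ℝ r x (e.symm (r x)) = r x := e.apply_symm_apply (r x)
    rw [h7, real_inner_self_eq_norm_sq, h1] at h6
    norm_num at h6
  simp_rw [hzero] at hvol
  simp only [integral_zero] at hvol
  have : 0 < volume.real (ball (0:E) 1) :=
    ENNReal.toReal_pos (measure_ball_pos _ _ one_pos).ne' measure_ball_lt_top.ne
  linarith

/-- A `C¹` map with outward-pointing values on a shell has a zero. -/
theorem exists_zero (G : E → E) (hG : ContDiff ℝ 1 G)
    (hpos : ∀ x, 1/2 ≤ ‖x‖ → ‖x‖ ≤ 1 → 0 < inner ℝ x (G x)) : ∃ x, G x = 0 := by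
  by_contra! hne
  let χ : ContDiffBump (0:E) := ⟨1/2, 1, by norm_num, by norm_num⟩
  let h : E → E := fun x => χ x • G x + (1 - χ x) • x
  have hh : ContDiff ℝ 1 h := by
    have : ContDiff ℝ 1 (χ : E → ℝ) := χ.contDiff
    exact (this.smul hG).add ((contDiff_const.sub this).smul contDiff_id)
  have hnz : ∀ x, h x ≠ 0 := by
    intro x hx
    rcases le_or_gt ‖x‖ (1/2) with h1 | h1
    · have : χ x = 1 := χ.one_of_mem_closedBall (mem_closedBall_zero_iff.2 h1)
      simp [h, this] at hx
      exact hne x hx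
    rcases le_or_gt 1 ‖x‖ with h2 | h2
    · have : χ x = 0 := χ.zero_of_le_dist (by rw [dist_zero_right]; exact h2)
      simp [h, this] at hx
      rw [hx] at h1; simp at h1; linarith
    · have h3 := hpos x h1.le h2.le
      have h4 : inner ℝ x (h x) = 0 := by rw [hx, inner_zero_right]
      simp only [h, inner_add_right, inner_smul_right, real_inner_self_eq_norm_sq] at h4
      have h5 : 0 ≤ χ x := χ.nonneg
      have h6 : χ x ≤ 1 := χ.le_one
      have h7 : 0 < ‖x‖^2 := by positivity
      rcases h5.eq_or_lt with h8 | h8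
      · rw [← h8] at h4; linarith
      · nlinarith [mul_pos h8 h3, mul_nonneg (sub_nonneg.2 h6) h7.le]
  refine no_retraction (fun x => ‖h x‖⁻¹ • h x) ?_ ?_ ?_
  · have hn : ContDiff ℝ 1 (fun x => ‖h x‖) := by
      rw [contDiff_iff_contDiffAt]
      exact fun x => (hh.contDiffAt).norm ℝ (hnz x)
    exact (hn.inv (fun x => norm_ne_zero_iff.2 (hnz x))).smul hh
  · intro x
    rw [norm_smul, norm_inv, norm_norm, inv_mul_cancel₀ (norm_ne_zero_iff.2 (hnz x))]
  · intro x hx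
    have : χ x = 0 := χ.zero_of_le_dist (by rw [dist_zero_right]; exact hx.ge)
    have : h x = x := by simp [h, this]
    simp [this, hx]

/-- Functions on the torus with smooth lift. -/
def Smooth {ℓ : ℕ} (g : C(Fin ℓ → AddCircle (1 : ℝ), ℂ)) : Prop :=
  ContDiff ℝ 1 (fun x : Fin ℓ → ℝ => g (fun i => (x i : AddCircle (1:ℝ))))

lemma dense_smooth (ℓ : ℕ) : Dense {g : C(Fin ℓ → AddCircle (1 : ℝ), ℂ) | Smooth g} := by
  let S : Submodule ℂ C(UnitAddTorus (Fin ℓ), ℂ) :=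
    { carrier := {g | Smooth g}
      add_mem' := fun {a b} ha hb => by
        have := ContDiff.add (show ContDiff ℝ 1 _ from ha) (show ContDiff ℝ 1 _ from hb)
        exact this
      zero_mem' := by
        show ContDiff ℝ 1 _
        exact contDiff_const
      smul_mem' := fun c a ha => by
        have := ContDiff.const_smul c (show ContDiff ℝ 1 _ from ha)
        exact this }
  have hle : Submodule.span ℂ (range (UnitAddTorus.mFourier (d := Fin ℓ))) ≤ S := by
    rw [Submodule.span_le]
    rintro _ ⟨m, rfl⟩
    show ContDiff ℝ 1 _
    simp only [UnitAddTorus.mFourier, ContinuousMap.coe_mk, fourier_coe_apply]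
    refine contDiff_prod fun i _ => ?_
    refine ContDiff.cexp ?_
    refine ContDiff.div_const ?_ _
    refine ContDiff.mul contDiff_const ?_
    exact Complex.ofRealCLM.contDiff.comp (contDiff_apply ℝ ℝ i)
  have h2 : Dense (Submodule.span ℂ (range (UnitAddTorus.mFourier (d := Fin ℓ))) :
      Set C(UnitAddTorus (Fin ℓ), ℂ)) := by
    rw [Submodule.dense_iff_topologicalClosure_eq_top]
    exact UnitAddTorus.span_mFourier_closure_eq_top
  exact h2.mono hle

lemma dense_smooth_tuple (ℓ n : ℕ) :
    Dense {g : Fin n → C(Fin ℓ → AddCircle (1 : ℝ), ℂ) | ∀ i, Smooth (g i)} := by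
  have := dense_pi (I := univ) (s := fun _ : Fin n =>
    {g : C(Fin ℓ → AddCircle (1 : ℝ), ℂ) | Smooth g}) (fun i _ => dense_smooth ℓ)
  convert this using 1
  ext g; simp

lemma mem_lgSet_of_ne {X : Type*} [TopologicalSpace X] {n : ℕ} (g : Fin n → C(X, ℂ))
    (h : ∀ x, ∃ i, g i x ≠ 0) : g ∈ lgSet C(X, ℂ) n := by
  have hpos : ∀ x, (∑ i, (starRingEnd ℂ (g i x)) * g i x) ≠ 0 := by
    intro x hx
    have h2 : ∑ i, ‖g i x‖^2 = 0 := by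
      have : ((∑ i, ‖g i x‖^2 : ℝ) : ℂ) = 0 := by
        rw [← hx]; push_cast
        exact Finset.sum_congr rfl fun i _ => (Complex.conj_mul' _).symm
      exact_mod_cast this
    obtain ⟨i, hi⟩ := h x
    have h3 := (Finset.sum_eq_zero_iff_of_nonneg (fun i _ => by positivity)).1 h2 i
      (Finset.mem_univ i)
    exact hi (by simpa using h3)
  refine ⟨fun j => ⟨fun x => (∑ i, (starRingEnd ℂ (g i x)) * g i x)⁻¹ * starRingEnd ℂ (g j x),
    ?_⟩, ?_⟩
  · refine Continuous.mul (Continuous.inv₀ ?_ hpos) ?_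
    · exact continuous_finsetSum _ fun i _ =>
        (Complex.continuous_conj.comp (g i).continuous).mul (g i).continuous
    · exact Complex.continuous_conj.comp (g j).continuous
  · ext x
    simp only [ContinuousMap.coe_sum, Finset.sum_apply, ContinuousMap.mul_apply,
      ContinuousMap.coe_mk, ContinuousMap.one_apply, mul_assoc]
    rw [← Finset.mul_sum, inv_mul_cancel₀ (hpos x)]

lemma exists_lift {ℓ : ℕ} (θ : Fin ℓ → AddCircle (1:ℝ)) :
    ∃ x : Fin ℓ → ℝ, (fun i => (x i : AddCircle (1:ℝ))) = θ := by
  choose x hx using fun i => QuotientAddGroup.mk_surjective (θ i)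
  exact ⟨x, funext hx⟩

lemma dense_lg (ℓ n : ℕ) (h : ℓ < 2 * n) :
    Dense (lgSet C(Fin ℓ → AddCircle (1 : ℝ), ℂ) n) := by
  rw [Metric.dense_iff]
  intro f r hr
  obtain ⟨g, hgf, hg⟩ := Metric.dense_iff.1 (dense_smooth_tuple ℓ n) f (r/2) (by positivity)
  let G : (Fin ℓ → ℝ) → (Fin n → ℂ) := fun x i => g i (fun j => (x j : AddCircle (1:ℝ)))
  have hG : ContDiff ℝ 1 G := contDiff_pi.2 hg
  have hd : Dense (range G)ᶜ := hG.dense_compl_range_of_finrank_lt_finrank (by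
    rw [Module.finrank_pi_fintype, Module.finrank_pi_fintype]
    simp [Complex.finrank_real_complex]
    omega)
  obtain ⟨c, hc, hcr⟩ := Metric.dense_iff.1 hd 0 (r/2) (by positivity)
  refine ⟨fun i => g i - ContinuousMap.const _ (c i), ?_, ?_⟩
  · rw [mem_ball] at *
    have h1 : dist (fun i => g i - ContinuousMap.const (Fin ℓ → AddCircle (1 : ℝ)) (c i)) g
        ≤ ‖c‖ := by
      rw [dist_pi_le_iff (norm_nonneg _)]
      intro i
      rw [dist_eq_norm, sub_sub_cancel_left, norm_neg,
        ContinuousMap.norm_le _ (norm_nonneg _)]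
      intro x
      exact norm_le_pi_norm c i
    rw [dist_zero_right] at hc
    calc _ ≤ _ := dist_triangle _ g f
      _ < r := by linarith
  · apply mem_lgSet_of_ne
    intro θ
    by_contra! hz
    obtain ⟨x, rfl⟩ := exists_lift θ
    exact hcr ⟨x, funext fun i => by simpa [sub_eq_zero] using hz i⟩

/-- The sine function of one coordinate. -/
noncomputable def sn {ℓ : ℕ} (j : Fin ℓ) : C(Fin ℓ → AddCircle (1 : ℝ), ℂ) :=
  ⟨fun θ => ((fourier 1 (θ j) : ℂ).im : ℂ), by fun_prop⟩

lemma mul_sin_ge (y : ℝ) (hy : |y| ≤ 1) : y^2 ≤ y * Real.sin (Real.pi / 2 * y) := by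
  have key : ∀ z : ℝ, 0 ≤ z → z ≤ 1 → z ≤ Real.sin (Real.pi / 2 * z) := by
    intro z h0 h1
    have hpi := Real.pi_pos
    have := Real.mul_le_sin (x := Real.pi / 2 * z) (by positivity) (by nlinarith)
    have h2 : 2 / Real.pi * (Real.pi / 2 * z) = z := by field_simp
    linarith
  rw [abs_le] at hy
  rcases le_total 0 y with h | h
  · nlinarith [key y h hy.2]
  · have := key (-y) (by linarith) (by linarith)
    rw [mul_neg, Real.sin_neg] at this
    nlinarith

/-- The Euclidean space carrying the local coordinates. -/
abbrev EE (n : ℕ) := EuclideanSpace ℝ (Fin n × Fin 2)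

lemma not_dense_lg (ℓ n : ℕ) (h : 2 * n ≤ ℓ) :
    ¬ Dense (lgSet C(Fin ℓ → AddCircle (1 : ℝ), ℂ) n) := by
  intro hd
  let e : Fin n × Fin 2 → Fin ℓ := fun p => Fin.castLE h (finProdFinEquiv.trans
    (finCongr (mul_comm n 2)) p)
  have he : Function.Injective e := by
    intro a b hab
    exact (finProdFinEquiv.trans (finCongr (mul_comm n 2))).injective
      (Fin.castLE_injective h hab)
  let f : Fin n → C(Fin ℓ → AddCircle (1 : ℝ), ℂ) := fun k =>
    sn (e (k, 0)) + Complex.I • sn (e (k, 1))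
  let ε : ℝ := 1 / (8 * n + 8)
  have hε : 0 < ε := by positivity
  obtain ⟨g₀, hg₀, y, hy⟩ := Metric.dense_iff.1 hd f ε hε
  let U : Set (Fin n → C(Fin ℓ → AddCircle (1 : ℝ), ℂ)) :=
    ball f ε ∩ {g | ‖∑ i, y i * g i - 1‖ < 1}
  have hU : IsOpen U := by
    refine isOpen_ball.inter (isOpen_lt ?_ continuous_const)
    fun_prop
  obtain ⟨g, ⟨hgf, hgy⟩, hgs⟩ := (dense_smooth_tuple ℓ n).inter_open_nonempty U hU
    ⟨g₀, hg₀, by simp [hy]⟩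
  have hgs : ∀ i, Smooth (g i) := hgs
  have hgnz : ∀ θ, ∃ i, g i θ ≠ 0 := by
    intro θ
    by_contra! hz
    have h1 := (∑ i, y i * g i - 1).norm_coe_le_norm θ
    simp [hz] at h1
    have hgy : ‖∑ i, y i * g i - 1‖ < 1 := hgy
    linarith
  let lift : EE n → (Fin ℓ → ℝ) := fun x j => ∑ p, if e p = j then x p / 4 else 0
  have hlift : ∀ x p, lift x (e p) = x p / 4 := by
    intro x p
    simp [lift, he.eq_iff]
  have hliftc : ContDiff ℝ 1 lift := by
    refine contDiff_pi.2 fun j => ContDiff.sum fun p _ => ?_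
    split_ifs
    · fun_prop
    · exact contDiff_const
  let Q : EE n → Fin n → ℂ := fun x k => g k (fun j => (lift x j : AddCircle (1:ℝ)))
  have hQ : ∀ k, ContDiff ℝ 1 (fun x => Q x k) := fun k => (hgs k).comp hliftc
  let coord : Fin 2 → (ℂ →L[ℝ] ℝ) := ![Complex.reCLM, Complex.imCLM]
  let G : EE n → EE n := fun x => WithLp.toLp 2 (fun p => coord p.2 (Q x p.1))
  have hG : ContDiff ℝ 1 G := by
    rw [contDiff_euclidean]
    intro p
    exact (coord p.2).contDiff.comp (hQ p.1)
  obtain ⟨x, hx⟩ := exists_zero G hG (by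
    intro x hx1 hx2
    have hcomp : ∀ p, |G x p - Real.sin (Real.pi / 2 * x p)| ≤ ε := by
      intro p
      have h1 : ‖g p.1 - f p.1‖ ≤ ε := by
        rw [← dist_eq_norm]
        exact (dist_le_pi_dist g f p.1).trans (mem_ball.1 hgf).le
      have h2 := ((g p.1 - f p.1).norm_coe_le_norm
        (fun j => (lift x j : AddCircle (1:ℝ)))).trans h1
      have hs : ∀ p, (sn (e p)) (fun j => (lift x j : AddCircle (1:ℝ)))
          = (Real.sin (Real.pi / 2 * x p) : ℂ) := by
        intro p
        simp only [sn, ContinuousMap.coe_mk, hlift, fourier_coe_apply]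
        have : 2 * (Real.pi:ℂ) * Complex.I * ((1:ℤ):ℂ) * ((x p / 4 : ℝ):ℂ) / ((1:ℝ):ℂ)
          = ((Real.pi / 2 * x p : ℝ) : ℂ) * Complex.I := by push_cast; ring
        rw [this, Complex.exp_ofReal_mul_I_im]
      have h3 : f p.1 (fun j => (lift x j : AddCircle (1:ℝ)))
          = (Real.sin (Real.pi / 2 * x (p.1, 0)) : ℂ)
            + Complex.I * (Real.sin (Real.pi / 2 * x (p.1, 1)) : ℂ) := by
        simp only [f, ContinuousMap.add_apply, ContinuousMap.smul_apply, hs, smul_eq_mul]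
      rw [ContinuousMap.sub_apply, h3] at h2
      obtain ⟨k, b⟩ := p
      fin_cases b
      · have := (Complex.abs_re_le_norm _).trans h2
        simpa [G, coord, Q, -Complex.ofReal_sin] using this
      · have := (Complex.abs_im_le_norm _).trans h2
        simpa [G, coord, Q, -Complex.ofReal_sin] using this
    have hxp : ∀ p, |x p| ≤ 1 := fun p => (PiLp.norm_apply_le x p).trans hx2
    have hterm : ∀ p, x p ^ 2 - ε ≤ x p * G x p := by
      intro p
      have h1 := mul_sin_ge (x p) (hxp p)
      have h2 : |x p * (G x p - Real.sin (Real.pi / 2 * x p))| ≤ ε := by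
        rw [abs_mul]
        calc _ ≤ 1 * ε := mul_le_mul (hxp p) (hcomp p) (abs_nonneg _) zero_le_one
          _ = ε := one_mul _
      have h3 := (abs_le.1 h2).1
      nlinarith
    have hin : inner ℝ x (G x) = ∑ p, x p * G x p := by
      rw [PiLp.inner_apply]
      exact Finset.sum_congr rfl fun p _ => by simp [mul_comm]
    have hsq : ∑ p, x p ^ 2 = ‖x‖ ^ 2 := by
      rw [EuclideanSpace.real_norm_sq_eq]
    have hsum := Finset.sum_le_sum (s := Finset.univ) fun p _ => hterm p
    rw [Finset.sum_sub_distrib, hsq] at hsum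
    simp at hsum
    have h4 : (n:ℝ) * 2 * ε < 1/4 := by
      simp only [ε]
      rw [mul_one_div, div_lt_div_iff₀ (by positivity) (by norm_num)]
      nlinarith
    rw [hin]
    nlinarith)
  obtain ⟨k, hk⟩ := hgnz (fun j => (lift x j : AddCircle (1:ℝ)))
  apply hk
  apply Complex.ext
  · have := congrArg (fun v : EE n => v (k, 0)) hx
    simpa [G, coord, Q] using this
  · have := congrArg (fun v : EE n => v (k, 1)) hx
    simpa [G, coord, Q] using this

end TorusSR

/-- The stable rank of `C(𝕋^ℓ)` is `⌊ℓ/2⌋ + 1`. -/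
theorem stableRank_continuousFunctions_torus (ℓ : ℕ) :
    stableRank C(Fin ℓ → AddCircle (1 : ℝ), ℂ) = ((ℓ / 2 + 1 : ℕ) : ℕ∞) := by
  apply le_antisymm
  · exact sInf_le ⟨_, rfl, TorusSR.dense_lg _ _ (by omega)⟩
  · refine le_sInf ?_
    rintro _ ⟨n, rfl, hn⟩
    by_contra hlt
    have : n < ℓ / 2 + 1 := by exact_mod_cast not_le.1 hlt
    exact TorusSR.not_dense_lg ℓ n (by omega) hn
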